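/- Let N ≥ 3, γ ∈ [0,2), K > 0, and let ρ : ℝᴺ → ℝ be measurable with 0 ≤ ρ(x) ≤ K|x|^{−γ} for a.e. x ∈ ℝᴺ. Then there exists a constant C_S > 0 depending only on N, γ, K such that for every f ∈ C_c^∞(ℝᴺ): ( ∫_{ℝᴺ} |f(x)|^{2(N−γ)/(N−2)} ρ(x) dx )^{(N−2)/(N−γ)} ≤ C_S ∫_{ℝᴺ} |∇f(x)|² dx. -/

import Mathlib

open MeasureTheory Metric Filter Set ENNReal

noncomputable section

abbrev Euc (N : ℕ) := EuclideanSpace ℝ (Fin N)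

/-- The weight condition: `k (1+|x|)^(-γ) ≤ ρ(x) ≤ K |x|^(-γ)` for a.e. `x`. -/
def WeightCond (N : ℕ) (γ k K : ℝ) (ρ : Euc N → ℝ) : Prop :=
  Measurable ρ ∧
    ∀ᵐ x : Euc N ∂volume, k * (1 + ‖x‖) ^ (-γ) ≤ ρ x ∧ ρ x ≤ K * ‖x‖ ^ (-γ)

/-- Local integrability with respect to the weight `ρ`. -/
def LocInt1 {N : ℕ} (ρ f : Euc N → ℝ) : Prop :=
  ∀ R : ℝ, 0 < R → IntegrableOn (fun x => |f x| * ρ x) (ball (0 : Euc N) R)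

/-- The weighted norm `‖f‖_{1,r}`. -/
def wnorm1 {N : ℕ} (ρ : Euc N → ℝ) (m γ : ℝ) (r : ℝ) (f : Euc N → ℝ) : ℝ :=
  sSup ((fun R : ℝ =>
    R ^ (-((2 - γ) / (m - 1)) - (N : ℝ) + γ) * ∫ x in ball (0 : Euc N) R, |f x| * ρ x) '' Ici r)

/-- Membership in the space `X`. -/
def memX {N : ℕ} (ρ : Euc N → ℝ) (m γ : ℝ) (f : Euc N → ℝ) : Prop :=
  LocInt1 ρ f ∧
    BddAbove ((fun R : ℝ =>
      R ^ (-((2 - γ) / (m - 1)) - (N : ℝ) + γ) * ∫ x in ball (0 : Euc N) R, |f x| * ρ x) '' Ici 1)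

/-- `ℓ(f) = lim_{r→∞} ‖f‖_{1,r}`; since `r ↦ ‖f‖_{1,r}` is nonincreasing and nonnegative,
the limit equals the infimum. -/
def ell {N : ℕ} (ρ : Euc N → ℝ) (m γ : ℝ) (f : Euc N → ℝ) : ℝ :=
  sInf ((fun r : ℝ => wnorm1 ρ m γ r f) '' Ici 1)

/-- The weighted norm `‖f‖_{∞,r}`. -/
def wnormInf {N : ℕ} (m γ : ℝ) (r : ℝ) (f : Euc N → ℝ) : ℝ :=
  sSup ((fun R : ℝ =>
    R ^ (-((2 - γ) / (m - 1))) *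
      (eLpNorm f ⊤ (volume.restrict (ball (0 : Euc N) R))).toReal) '' Ici r)

/-- Membership in the space `X_∞`. -/
def memXinf {N : ℕ} (m γ : ℝ) (f : Euc N → ℝ) : Prop :=
  AEStronglyMeasurable f volume ∧
  (∀ R : ℝ, 0 < R → eLpNorm f ⊤ (volume.restrict (ball (0 : Euc N) R)) < ⊤) ∧
  BddAbove ((fun R : ℝ =>
    R ^ (-((2 - γ) / (m - 1))) *
      (eLpNorm f ⊤ (volume.restrict (ball (0 : Euc N) R))).toReal) '' Ici 1)

/-- Signed power `u^m := |u|^(m-1) u`. -/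
def spow (m s : ℝ) : ℝ := |s| ^ (m - 1) * s

/-- The Laplacian of `φ : ℝᴺ → ℝ`, as a sum of second directional derivatives along the
standard orthonormal basis. -/
def lap {N : ℕ} (φ : Euc N → ℝ) (x : Euc N) : ℝ :=
  ∑ i : Fin N, fderiv ℝ (fun y => fderiv ℝ φ y (EuclideanSpace.single i (1 : ℝ))) x
    (EuclideanSpace.single i (1 : ℝ))

/-- The open time interval `(0,T)`, for `T ∈ (0,∞]`. -/
def TimeSet (T : ℝ≥0∞) : Set ℝ := {t : ℝ | 0 < t ∧ ENNReal.ofReal t < T}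

/-- The time interval `[0,T)`, for `T ∈ (0,∞]`. -/
def TimeSet0 (T : ℝ≥0∞) : Set ℝ := {t : ℝ | 0 ≤ t ∧ ENNReal.ofReal t < T}

/-- Very weak solution of `ρ u_t = Δ(u^m)` on `ℝᴺ × (0,T)` with initial datum `u₀`. -/
def IsVeryWeakSol {N : ℕ} (ρ : Euc N → ℝ) (m : ℝ) (T : ℝ≥0∞)
    (u : Euc N → ℝ → ℝ) (u₀ : Euc N → ℝ) : Prop :=
  (∀ t ∈ TimeSet0 T, LocInt1 ρ (fun x => u x t)) ∧
  (∀ s ∈ TimeSet0 T, ∀ R : ℝ, 0 < R →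
    Tendsto (fun t => ∫ x in ball (0 : Euc N) R, |u x t - u x s| * ρ x)
      (nhdsWithin s (TimeSet0 T)) (nhds 0)) ∧
  (∀ᵐ x : Euc N ∂volume, u x 0 = u₀ x) ∧
  (∀ R : ℝ, 0 < R → ∀ a b : ℝ, 0 < a → a ≤ b → ENNReal.ofReal b < T →
    IntegrableOn (fun p : Euc N × ℝ => spow m (u p.1 p.2)) (ball (0 : Euc N) R ×ˢ Icc a b)) ∧
  (∀ φ : Euc N × ℝ → ℝ, ContDiff ℝ (⊤ : ℕ∞) φ → HasCompactSupport φ →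
    tsupport φ ⊆ {p : Euc N × ℝ | p.2 ∈ TimeSet T} →
    -(∫ p : Euc N × ℝ in (univ : Set (Euc N)) ×ˢ TimeSet T,
        u p.1 p.2 * deriv (fun s => φ (p.1, s)) p.2 * ρ p.1) =
      ∫ p : Euc N × ℝ in (univ : Set (Euc N)) ×ˢ TimeSet T,
        spow m (u p.1 p.2) * lap (fun y => φ (y, p.2)) p.1)

/-- The existence time `T = C / L^(m-1)` if `L > 0`, and `T = ∞` if `L = 0` (here `L = ℓ(u₀)` or
`L = ‖u₀‖_{1,r}`). -/
def Tof (C m L : ℝ) : ℝ≥0∞ := if 0 < L then ENNReal.ofReal (C / L ^ (m - 1)) else ⊤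

end


/-!
In dimension `n` and with `p < n` in place of `2`, the inequality interpolates between `γ = 0` and
`γ = p`. For `γ = 0` it is the Gagliardo–Nirenberg–Sobolev inequality, for `γ = p` it is Hardy's
inequality `∫ |f|^p |x|^(-p) ≤ (p / (n - p))^p ∫ |Df|^p`, and Hölder's inequality with weights
`γ / p` and `1 - γ / p` gives everything in between. For Hardy's inequality, integrate `Df` along
the ray from `x` to infinity to get `|f x| / |x| ≤ ∫_{t > 1} |Df (t x)| dt`; the `L^p` norm of
`x ↦ |Df (t x)|` is `t^(-n/p) ‖Df‖_p`, and `t^(-n/p)` is integrable on `(1, ∞)` because `p < n`.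
-/

open Module

theorem rpow_lintegral_le_rpow_lintegral_mul {α : Type*} [MeasurableSpace α] {μ : Measure α}
    {w h : α → ℝ≥0∞} (hw : AEMeasurable w μ) (hh : AEMeasurable h μ)
    (hw0 : ∀ᵐ a ∂μ, w a ≠ 0) (hwtop : ∀ᵐ a ∂μ, w a ≠ ∞) {p : ℝ} (hp : 1 ≤ p) :
    (∫⁻ a, h a ∂μ) ^ p ≤ (∫⁻ a, w a ∂μ) ^ (p - 1) * ∫⁻ a, w a ^ (1 - p) * h a ^ p ∂μ := by
  have hp0 : 0 < p := by linarith
  have hp1 : 0 ≤ (p - 1) / p := div_nonneg (by linarith) hp0.le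
  have factor : ∀ᵐ a ∂μ, h a = w a ^ ((p - 1) / p) * (w a ^ (1 - p) * h a ^ p) ^ p⁻¹ := by
    filter_upwards [hw0, hwtop] with a ha0 hatop
    rw [ENNReal.mul_rpow_of_nonneg _ _ (by positivity), ENNReal.rpow_rpow_inv hp0.ne',
      ← ENNReal.rpow_mul, ← mul_assoc, ← ENNReal.rpow_add _ _ ha0 hatop,
      show (p - 1) / p + (1 - p) * p⁻¹ = 0 by ring, ENNReal.rpow_zero, one_mul]
  have hölder := ENNReal.lintegral_mul_norm_pow_le hw ((hw.pow_const (1 - p)).mul (hh.pow_const p))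
    hp1 (inv_nonneg.2 hp0.le) (by field_simp; ring)
  rw [lintegral_congr_ae factor]
  calc _ ≤ _ := ENNReal.rpow_le_rpow hölder hp0.le
    _ = _ := by
      rw [ENNReal.mul_rpow_of_nonneg _ _ hp0.le, ENNReal.rpow_inv_rpow hp0.ne', ← ENNReal.rpow_mul,
        div_mul_cancel₀ _ hp0.ne']
      rfl

theorem lintegral_Ioi_one_rpow_neg {a : ℝ} (ha : 1 < a) :
    ∫⁻ t in Ioi (1 : ℝ), ENNReal.ofReal t ^ (-a) = ENNReal.ofReal (a - 1)⁻¹ := by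
  have rpow_ofReal : ∀ t ∈ Ioi (1 : ℝ), ENNReal.ofReal t ^ (-a) = ENNReal.ofReal (t ^ (-a)) :=
    fun t ht => ENNReal.ofReal_rpow_of_pos (zero_lt_one.trans ht)
  have rpow_nonneg : ∀ t ∈ Ioi (1 : ℝ), 0 ≤ t ^ (-a) :=
    fun t ht => Real.rpow_nonneg (zero_le_one.trans ht.le) _
  rw [setLIntegral_congr_fun measurableSet_Ioi rpow_ofReal, ← ofReal_integral_eq_lintegral_ofReal
    (integrableOn_Ioi_rpow_of_lt (by linarith) one_pos)
    (ae_restrict_of_forall_mem measurableSet_Ioi rpow_nonneg),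
    integral_Ioi_rpow_of_lt (by linarith) one_pos, Real.one_rpow,
    show -a + 1 = -(a - 1) by ring, neg_div_neg_eq, one_div]

theorem rpow_lintegral_Ioi_one_le {h : ℝ → ℝ≥0∞} (hh : Measurable h) {a p : ℝ} (ha : 1 < a)
    (hp : 1 ≤ p) :
    (∫⁻ t in Ioi (1 : ℝ), h t) ^ p ≤ ENNReal.ofReal (a - 1)⁻¹ ^ (p - 1) *
      ∫⁻ t in Ioi (1 : ℝ), ENNReal.ofReal t ^ (a * (p - 1)) * h t ^ p := by
  have ofReal_ne_zero : ∀ t ∈ Ioi (1 : ℝ), ENNReal.ofReal t ≠ 0 := fun t ht =>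
    (ENNReal.ofReal_pos.2 (zero_lt_one.trans ht)).ne'
  have hölder := rpow_lintegral_le_rpow_lintegral_mul (μ := volume.restrict (Ioi (1 : ℝ)))
    (ENNReal.measurable_ofReal.pow_const (-a)).aemeasurable hh.aemeasurable
    (ae_restrict_of_forall_mem measurableSet_Ioi fun t ht =>
      (ENNReal.rpow_pos (pos_iff_ne_zero.2 (ofReal_ne_zero t ht)) ENNReal.ofReal_ne_top).ne')
    (ae_restrict_of_forall_mem measurableSet_Ioi fun t ht =>
      ENNReal.rpow_ne_top_of_ne_zero (ofReal_ne_zero t ht) ENNReal.ofReal_ne_top) hp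
  simp only [← ENNReal.rpow_mul] at hölder
  rwa [lintegral_Ioi_one_rpow_neg ha, show -a * (1 - p) = a * (p - 1) by ring] at hölder

section Rays

variable {E F : Type*} [NormedAddCommGroup E] [NormedSpace ℝ E] [NormedAddCommGroup F]
  [NormedSpace ℝ F]

theorem enorm_le_lintegral_Ioi_deriv {g : ℝ → F} (hg : ContDiff ℝ 1 g) (hgc : HasCompactSupport g)
    (a : ℝ) : ‖g a‖ₑ ≤ ∫⁻ t in Ioi a, ‖deriv g t‖ₑ := by
  have reflected : ‖g a‖ₑ ≤ ∫⁻ t in Iic (-a), ‖deriv g (-t)‖ₑ := by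
    simpa [Function.comp_def, deriv_comp_neg] using
      (hgc.comp_homeomorph (Homeomorph.neg ℝ)).enorm_le_lintegral_Ici_deriv
        (hg.comp contDiff_neg) (-a)
  have neg_preimage : Neg.neg ⁻¹' Ici a = Iic (-a) := by ext; simp
  rwa [← neg_preimage, (Measure.measurePreserving_neg volume).setLIntegral_comp_preimage_emb
    (Homeomorph.neg ℝ).measurableEmbedding (fun t => ‖deriv g t‖ₑ),
    setLIntegral_congr Ioi_ae_eq_Ici.symm] at reflected

theorem enorm_le_enorm_mul_lintegral_enorm_fderiv_smul {f : E → F} (hf : ContDiff ℝ 1 f)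
    (hfc : HasCompactSupport f) {x : E} (hx : x ≠ 0) :
    ‖f x‖ₑ ≤ ‖x‖ₑ * ∫⁻ t in Ioi (1 : ℝ), ‖fderiv ℝ f (t • x)‖ₑ := by
  have deriv_ray (t : ℝ) : deriv (fun s : ℝ => f (s • x)) t = fderiv ℝ f (t • x) x := by
    have hasDerivAt_ray : HasDerivAt (fun s : ℝ => s • x) x t := by
      simpa using (hasDerivAt_id t).smul_const x
    exact ((hf.differentiable one_ne_zero (t • x)).hasFDerivAt.comp_hasDerivAt t
      hasDerivAt_ray).deriv
  calc ‖f x‖ₑ = ‖f ((1 : ℝ) • x)‖ₑ := by rw [one_smul]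
    _ ≤ ∫⁻ t in Ioi (1 : ℝ), ‖deriv (fun s : ℝ => f (s • x)) t‖ₑ :=
      enorm_le_lintegral_Ioi_deriv (hf.comp (contDiff_id.smul contDiff_const))
        (hfc.comp_isClosedEmbedding (isClosedEmbedding_smul_left hx)) 1
    _ ≤ ∫⁻ t in Ioi (1 : ℝ), ‖x‖ₑ * ‖fderiv ℝ f (t • x)‖ₑ := by
      gcongr with t
      rw [deriv_ray, mul_comm]
      exact (fderiv ℝ f (t • x)).le_opENorm x
    _ = ‖x‖ₑ * ∫⁻ t in Ioi (1 : ℝ), ‖fderiv ℝ f (t • x)‖ₑ :=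
      lintegral_const_mul' _ _ enorm_ne_top

end Rays

section ToENNReal

variable {E F : Type*} [NormedAddCommGroup E] [NormedAddCommGroup F]

-- At `x = 0` and `γ > 0` the left side has the junk value `0`, the right side is `∞`.
theorem ofReal_norm_rpow_neg_le {γ : ℝ} (hγ : 0 ≤ γ) (x : E) :
    ENNReal.ofReal (‖x‖ ^ (-γ)) ≤ ‖x‖ₑ ^ (-γ) := by
  rcases eq_or_ne x 0 with rfl | hx
  · rcases hγ.eq_or_lt with rfl | hγ
    · simp
    · simp [Real.zero_rpow (neg_neg_of_pos hγ).ne, hγ]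
  · rw [← ENNReal.ofReal_rpow_of_pos (norm_pos_iff.2 hx), ofReal_norm]

theorem ofReal_integral_norm_rpow {X : Type*} [TopologicalSpace X] [MeasurableSpace X]
    [OpensMeasurableSpace X] {μ : Measure X} [IsFiniteMeasureOnCompacts μ] {g : X → F} {p : ℝ}
    (hg : Continuous g) (hgc : HasCompactSupport g) (hp : 0 < p) :
    ENNReal.ofReal (∫ x, ‖g x‖ ^ p ∂μ) = ∫⁻ x, ‖g x‖ₑ ^ p ∂μ := by
  have integrable : Integrable (fun x => ‖g x‖ ^ p) μ :=
    (hg.norm.rpow_const fun _ => .inr hp.le).integrable_of_hasCompactSupport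
      (hgc.comp_left (g := fun y => ‖y‖ ^ p) (by simp [hp.ne']))
  rw [ofReal_integral_eq_lintegral_ofReal integrable (.of_forall fun x => by positivity)]
  simp only [← ENNReal.ofReal_rpow_of_nonneg (norm_nonneg _) hp.le, ofReal_norm]

end ToENNReal

section Sobolev

variable {E F : Type*} [NormedAddCommGroup E] [NormedSpace ℝ E] [FiniteDimensional ℝ E]
  [MeasurableSpace E] [BorelSpace E] [NormedAddCommGroup F] [NormedSpace ℝ F]
  (μ : Measure E) [μ.IsAddHaarMeasure] {p γ : ℝ} {f : E → F}

theorem lintegral_comp_smul_of_pos (g : E → ℝ≥0∞) {t : ℝ} (ht : 0 < t) :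
    ∫⁻ x, g (t • x) ∂μ = ENNReal.ofReal t ^ (-(finrank ℝ E : ℝ)) * ∫⁻ x, g x ∂μ := by
  calc ∫⁻ x, g (t • x) ∂μ = ∫⁻ x, g x ∂μ.map (t • ·) :=
        ((Homeomorph.smulOfNeZero t ht.ne').measurableEmbedding.lintegral_map g).symm
    _ = ENNReal.ofReal t ^ (-(finrank ℝ E : ℝ)) * ∫⁻ x, g x ∂μ := by
      rw [Measure.map_addHaar_smul μ ht.ne', lintegral_smul_measure, smul_eq_mul,
        ENNReal.ofReal_rpow_of_pos ht, Real.rpow_neg ht.le, Real.rpow_natCast,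
        abs_of_pos (by positivity)]

theorem lintegral_rpow_lintegral_Ioi_comp_smul_le {g : E → ℝ≥0∞} (hg : Measurable g) (hp : 1 ≤ p)
    (hpn : p < finrank ℝ E) :
    ∫⁻ x, (∫⁻ t in Ioi (1 : ℝ), g (t • x)) ^ p ∂μ ≤
      ENNReal.ofReal (p / (finrank ℝ E - p)) ^ p * ∫⁻ x, g x ^ p ∂μ := by
  have hp0 : 0 < p := by linarith
  set d := (finrank ℝ E : ℝ)
  set A := ENNReal.ofReal (p / (d - p))
  have hdp : 1 < d / p := (one_lt_div hp0).2 hpn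
  have hA : ENNReal.ofReal (d / p - 1)⁻¹ = A := by rw [div_sub_one hp0.ne', inv_div]
  have hA0 : A ≠ 0 := (ENNReal.ofReal_pos.2 (div_pos hp0 (sub_pos.2 hpn))).ne'
  have hgsmul : Measurable fun z : E × ℝ => g (z.2 • z.1) := by fun_prop
  have inner_eq : ∀ t ∈ Ioi (1 : ℝ), ∫⁻ x, ENNReal.ofReal t ^ (d / p * (p - 1)) * g (t • x) ^ p ∂μ =
      ENNReal.ofReal t ^ (-(d / p)) * ∫⁻ x, g x ^ p ∂μ := by
    intro t ht
    have ht0 : 0 < t := zero_lt_one.trans ht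
    rw [lintegral_const_mul _ (by fun_prop), lintegral_comp_smul_of_pos μ (fun x => g x ^ p) ht0,
      ← mul_assoc, ← ENNReal.rpow_add _ _ (ENNReal.ofReal_pos.2 ht0).ne' ENNReal.ofReal_ne_top]
    congr 2
    field_simp
    ring
  /- Minkowski's inequality for the dilations of `g` would give this at once; Hölder against the
  weight `t ^ (-(d / p))`, which is proportional to the `L^p` norm of `x ↦ g (t • x)`, loses
  nothing in the constant. -/
  calc _ ≤ ∫⁻ x, A ^ (p - 1) *
          ∫⁻ t in Ioi (1 : ℝ), ENNReal.ofReal t ^ (d / p * (p - 1)) * g (t • x) ^ p ∂volume ∂μ := by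
        gcongr with x
        rw [← hA]
        exact rpow_lintegral_Ioi_one_le (hgsmul.comp measurable_prodMk_left) hdp hp
    _ = A ^ (p - 1) * ∫⁻ t in Ioi (1 : ℝ),
          ∫⁻ x, ENNReal.ofReal t ^ (d / p * (p - 1)) * g (t • x) ^ p ∂μ := by
        rw [lintegral_const_mul' _ _ (by finiteness), lintegral_lintegral_swap (by fun_prop)]
    _ = A ^ (p - 1) * (A * ∫⁻ x, g x ^ p ∂μ) := by
        rw [setLIntegral_congr_fun measurableSet_Ioi inner_eq, lintegral_mul_const _ (by fun_prop),
          lintegral_Ioi_one_rpow_neg hdp, hA]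
    _ = A ^ p * ∫⁻ x, g x ^ p ∂μ := by
        rw [← mul_assoc]
        nth_rw 2 [← ENNReal.rpow_one A]
        rw [← ENNReal.rpow_add _ _ hA0 ENNReal.ofReal_ne_top, sub_add_cancel]

theorem lintegral_hardy (hp : 1 ≤ p) (hpn : p < finrank ℝ E) (hf : ContDiff ℝ 1 f)
    (hfc : HasCompactSupport f) :
    ∫⁻ x, ‖f x‖ₑ ^ p * ‖x‖ₑ ^ (-p) ∂μ ≤
      ENNReal.ofReal (p / (finrank ℝ E - p)) ^ p * ∫⁻ x, ‖fderiv ℝ f x‖ₑ ^ p ∂μ := by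
  have hp0 : 0 < p := by linarith
  have : Nontrivial E := nontrivial_of_finrank_pos (R := ℝ) (by exact_mod_cast hp0.trans hpn)
  refine le_trans (lintegral_mono_ae ?_) (lintegral_rpow_lintegral_Ioi_comp_smul_le μ
    (hf.continuous_fderiv one_ne_zero).enorm.measurable hp hpn)
  filter_upwards [Measure.ae_ne μ 0] with x hx
  rw [ENNReal.rpow_neg, ← ENNReal.inv_rpow, ← ENNReal.mul_rpow_of_nonneg _ _ hp0.le,
    ← div_eq_mul_inv]
  gcongr
  exact ENNReal.div_le_of_le_mul' (enorm_le_enorm_mul_lintegral_enorm_fderiv_smul hf hfc hx)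

variable [FiniteDimensional ℝ F]

theorem lintegral_sobolev (hp : 1 ≤ p) (hpn : p < finrank ℝ E) (hf : ContDiff ℝ 1 f)
    (hfc : HasCompactSupport f) :
    ∫⁻ x, ‖f x‖ₑ ^ (p * finrank ℝ E / (finrank ℝ E - p)) ∂μ ≤
      (SNormLESNormFDerivOfEqConst F μ p : ℝ≥0∞) ^ (p * finrank ℝ E / (finrank ℝ E - p)) *
        (∫⁻ x, ‖fderiv ℝ f x‖ₑ ^ p ∂μ) ^ (finrank ℝ E / (finrank ℝ E - p) : ℝ) := by
  set d := (finrank ℝ E : ℝ)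
  have hp0 : 0 < p := by linarith
  have hd : 0 < d := hp0.trans hpn
  have hdp : 0 < d - p := sub_pos.2 hpn
  set q := p * d / (d - p)
  have hq : 0 < q := by positivity
  have inv_q : q⁻¹ = p⁻¹ - d⁻¹ := by simp only [q]; field_simp
  have inv_p_mul_q : 1 / p * q = d / (d - p) := by simp only [q]; field_simp
  clear_value q
  lift p to NNReal using hp0.le
  lift q to NNReal using hq.le
  have sobolev : eLpNorm f q μ ≤ SNormLESNormFDerivOfEqConst F μ p * eLpNorm (fderiv ℝ f) p μ :=
    eLpNorm_le_eLpNorm_fderiv_of_eq μ hf hfc (by exact_mod_cast hp)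
      (Nat.cast_pos.1 hd) inv_q
  rw [eLpNorm_nnreal_eq_lintegral (by exact_mod_cast hq.ne'),
    eLpNorm_nnreal_eq_lintegral (by exact_mod_cast hp0.ne'), one_div,
    ENNReal.rpow_inv_le_iff hq, ENNReal.mul_rpow_of_nonneg _ _ hq.le, ← ENNReal.rpow_mul] at sobolev
  rwa [inv_p_mul_q] at sobolev

theorem lintegral_hardy_sobolev (hp : 1 ≤ p) (hpn : p < finrank ℝ E) (hγ : 0 ≤ γ) (hγp : γ ≤ p)
    (hf : ContDiff ℝ 1 f) (hfc : HasCompactSupport f) :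
    ∫⁻ x, ‖f x‖ₑ ^ (p * (finrank ℝ E - γ) / (finrank ℝ E - p)) * ‖x‖ₑ ^ (-γ) ∂μ ≤
      ENNReal.ofReal (p / (finrank ℝ E - p)) ^ γ *
        (SNormLESNormFDerivOfEqConst F μ p : ℝ≥0∞) ^
          (finrank ℝ E * (p - γ) / (finrank ℝ E - p) : ℝ) *
        (∫⁻ x, ‖fderiv ℝ f x‖ₑ ^ p ∂μ) ^ ((finrank ℝ E - γ) / (finrank ℝ E - p) : ℝ) := by
  have hardy := lintegral_hardy μ hp hpn hf hfc
  have sobolev := lintegral_sobolev μ hp hpn hf hfc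
  set d := (finrank ℝ E : ℝ)
  set D := ∫⁻ x, ‖fderiv ℝ f x‖ₑ ^ p ∂μ
  set A := ENNReal.ofReal (p / (d - p))
  set C := (SNormLESNormFDerivOfEqConst F μ p : ℝ≥0∞)
  have hp0 : 0 < p := by linarith
  have hdp : 0 < d - p := sub_pos.2 hpn
  have hd : 0 < d := hp0.trans hpn
  have hθ : 0 ≤ γ / p := by positivity
  have hθ' : 0 ≤ 1 - γ / p := sub_nonneg.2 ((div_le_one hp0).2 hγp)
  have interpolate (x : E) : ‖f x‖ₑ ^ (p * (d - γ) / (d - p)) * ‖x‖ₑ ^ (-γ) =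
      (‖f x‖ₑ ^ p * ‖x‖ₑ ^ (-p)) ^ (γ / p) * (‖f x‖ₑ ^ (p * d / (d - p))) ^ (1 - γ / p) := by
    rw [ENNReal.mul_rpow_of_nonneg _ _ hθ, mul_right_comm]
    simp only [← ENNReal.rpow_mul]
    rw [← ENNReal.rpow_add_of_nonneg _ _ (by positivity) (by positivity)]
    congr 2 <;> field_simp
    ring
  have hfm : Measurable fun x => ‖f x‖ₑ := hf.continuous.enorm.measurable
  calc _ = _ := lintegral_congr interpolate
    _ ≤ _ := ENNReal.lintegral_mul_norm_pow_le (by fun_prop)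
      (hfm.pow_const _).aemeasurable hθ hθ' (by ring)
    _ ≤ (A ^ p * D) ^ (γ / p) * (C ^ (p * d / (d - p)) * D ^ (d / (d - p))) ^ (1 - γ / p) := by
      gcongr
    _ = _ := by
      simp only [ENNReal.mul_rpow_of_nonneg _ _ hθ, ENNReal.mul_rpow_of_nonneg _ _ hθ',
        ← ENNReal.rpow_mul]
      rw [mul_mul_mul_comm, ← ENNReal.rpow_add_of_nonneg _ _ hθ (by positivity)]
      congr 3 <;> field_simp
      ring

variable (F) in
theorem exists_lintegral_weighted_sobolev (hp : 1 ≤ p) (hpn : p < finrank ℝ E) (hγ : 0 ≤ γ)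
    (hγp : γ ≤ p) (K : ℝ≥0∞) (hK : K ≠ ∞) :
    ∃ C : ℝ≥0∞, C ≠ ∞ ∧ ∀ ρ : E → ℝ≥0∞, (∀ᵐ x ∂μ, ρ x ≤ K * ‖x‖ₑ ^ (-γ)) →
      ∀ f : E → F, ContDiff ℝ 1 f → HasCompactSupport f →
        (∫⁻ x, ‖f x‖ₑ ^ (p * (finrank ℝ E - γ) / (finrank ℝ E - p)) * ρ x ∂μ) ^
            ((finrank ℝ E - p) / (finrank ℝ E - γ) : ℝ) ≤
          C * ∫⁻ x, ‖fderiv ℝ f x‖ₑ ^ p ∂μ := by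
  have hdp : (0 : ℝ) < finrank ℝ E - p := sub_pos.2 hpn
  have hdγ : (0 : ℝ) < finrank ℝ E - γ := by linarith
  have hr : (0 : ℝ) ≤ (finrank ℝ E - p) / (finrank ℝ E - γ) := by positivity
  have hs : (0 : ℝ) ≤ finrank ℝ E * (p - γ) / (finrank ℝ E - p) :=
    div_nonneg (mul_nonneg (by positivity) (sub_nonneg.2 hγp)) hdp.le
  refine ⟨(K * (ENNReal.ofReal (p / (finrank ℝ E - p)) ^ γ *
    (SNormLESNormFDerivOfEqConst F μ p : ℝ≥0∞) ^ (finrank ℝ E * (p - γ) / (finrank ℝ E - p) : ℝ))) ^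
      ((finrank ℝ E - p) / (finrank ℝ E - γ) : ℝ), by finiteness, fun ρ hρ f hf hfc => ?_⟩
  have weighted : ∫⁻ x, ‖f x‖ₑ ^ (p * (finrank ℝ E - γ) / (finrank ℝ E - p)) * ρ x ∂μ ≤
      K * ∫⁻ x, ‖f x‖ₑ ^ (p * (finrank ℝ E - γ) / (finrank ℝ E - p)) * ‖x‖ₑ ^ (-γ) ∂μ := by
    rw [← lintegral_const_mul' _ _ hK]
    refine lintegral_mono_ae ?_
    filter_upwards [hρ] with x hx
    rw [mul_left_comm]
    gcongr
  calc _ ≤ _ := ENNReal.rpow_le_rpow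
        (weighted.trans (mul_le_mul_right (lintegral_hardy_sobolev μ hp hpn hγ hγp hf hfc) _)) hr
    _ = _ := by
      rw [← mul_assoc, ENNReal.mul_rpow_of_nonneg _ _ hr, ← ENNReal.rpow_mul,
        div_mul_div_cancel₀ hdp.ne', div_self hdγ.ne', ENNReal.rpow_one]

variable (F) in
theorem weighted_sobolev_inequality_general (hp : 1 ≤ p) (hpn : p < finrank ℝ E) (hγ : 0 ≤ γ)
    (hγp : γ ≤ p) (K : ℝ) :
    ∃ C : ℝ, 0 < C ∧ ∀ ρ : E → ℝ, AEMeasurable ρ μ →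
      (∀ᵐ x ∂μ, 0 ≤ ρ x ∧ ρ x ≤ K * ‖x‖ ^ (-γ)) →
      ∀ f : E → F, ContDiff ℝ 1 f → HasCompactSupport f →
        (∫ x, ‖f x‖ ^ (p * (finrank ℝ E - γ) / (finrank ℝ E - p)) * ρ x ∂μ) ^
            ((finrank ℝ E - p) / (finrank ℝ E - γ) : ℝ) ≤
          C * ∫ x, ‖fderiv ℝ f x‖ ^ p ∂μ := by
  obtain ⟨C, hC, sobolev⟩ := exists_lintegral_weighted_sobolev F μ hp hpn hγ hγp
    (ENNReal.ofReal K) ENNReal.ofReal_ne_top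
  refine ⟨C.toReal + 1, by positivity, fun ρ hρm hρ f hf hfc => ?_⟩
  have hp0 : 0 < p := by linarith
  have hdp : (0 : ℝ) < finrank ℝ E - p := sub_pos.2 hpn
  have hdγ : (0 : ℝ) < finrank ℝ E - γ := by linarith
  have hq : 0 ≤ p * (finrank ℝ E - γ) / (finrank ℝ E - p) :=
    div_nonneg (mul_nonneg hp0.le hdγ.le) hdp.le
  have hρK : ∀ᵐ x ∂μ, ENNReal.ofReal (ρ x) ≤ ENNReal.ofReal K * ‖x‖ₑ ^ (-γ) := by
    filter_upwards [hρ] with x hx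
    calc ENNReal.ofReal (ρ x) ≤ ENNReal.ofReal (K * ‖x‖ ^ (-γ)) := ENNReal.ofReal_le_ofReal hx.2
      _ = ENNReal.ofReal K * ENNReal.ofReal (‖x‖ ^ (-γ)) := ENNReal.ofReal_mul' (by positivity)
      _ ≤ ENNReal.ofReal K * ‖x‖ₑ ^ (-γ) := by gcongr; exact ofReal_norm_rpow_neg_le hγ x
  have lhs_eq : ∫ x, ‖f x‖ ^ (p * (finrank ℝ E - γ) / (finrank ℝ E - p)) * ρ x ∂μ =
      (∫⁻ x, ‖f x‖ₑ ^ (p * (finrank ℝ E - γ) / (finrank ℝ E - p)) *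
        ENNReal.ofReal (ρ x) ∂μ).toReal := by
    have measurable_lhs : AEStronglyMeasurable
        (fun x => ‖f x‖ ^ (p * (finrank ℝ E - γ) / (finrank ℝ E - p)) * ρ x) μ :=
      (hf.continuous.norm.rpow_const fun _ => .inr hq).aestronglyMeasurable.mul
        hρm.aestronglyMeasurable
    rw [integral_eq_lintegral_of_nonneg_ae
      (by filter_upwards [hρ] with x hx using mul_nonneg (by positivity) hx.1) measurable_lhs]
    simp only [ENNReal.ofReal_mul (Real.rpow_nonneg (norm_nonneg _) _),
      ← ENNReal.ofReal_rpow_of_nonneg (norm_nonneg _) hq, ofReal_norm]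
  have ofReal_energy := ofReal_integral_norm_rpow (μ := μ) (hf.continuous_fderiv one_ne_zero)
    (hfc.fderiv ℝ) hp0
  have energy_nonneg : 0 ≤ ∫ x, ‖fderiv ℝ f x‖ ^ p ∂μ := integral_nonneg fun x => by positivity
  calc _ ≤ (C * ∫⁻ x, ‖fderiv ℝ f x‖ₑ ^ p ∂μ).toReal := by
        rw [lhs_eq, ENNReal.toReal_rpow]
        exact ENNReal.toReal_mono (ENNReal.mul_ne_top hC (ofReal_energy ▸ ENNReal.ofReal_ne_top))
          (sobolev _ hρK f hf hfc)
    _ = C.toReal * ∫ x, ‖fderiv ℝ f x‖ ^ p ∂μ := by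
        rw [← ofReal_energy, ENNReal.toReal_mul, ENNReal.toReal_ofReal energy_nonneg]
    _ ≤ _ := by gcongr; linarith

end Sobolev

open MeasureTheory Metric Filter Set ENNReal in
/-- **Weighted Sobolev inequality** (inequality (3.10) of Muratori–Petitt): for `γ ∈ [0,2)`
and any weight `0 ≤ ρ(x) ≤ K|x|^{-γ}`, there is `C_S > 0` depending only on `N, γ, K` with
`(∫ |f|^{2(N-γ)/(N-2)} ρ dx)^{(N-2)/(N-γ)} ≤ C_S ∫ |∇f|² dx` for all `f ∈ C_c^∞(ℝᴺ)`. -/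
theorem weighted_sobolev_inequality
    (N : ℕ) (hN : 3 ≤ N) (γ K : ℝ)
    (hγ0 : 0 ≤ γ) (hγ2 : γ < 2) (hK : 0 < K) :
    ∃ C_S : ℝ, 0 < C_S ∧
      ∀ ρ : Euc N → ℝ, Measurable ρ →
        (∀ᵐ x : Euc N ∂volume, 0 ≤ ρ x ∧ ρ x ≤ K * ‖x‖ ^ (-γ)) →
      ∀ f : Euc N → ℝ, ContDiff ℝ (⊤ : ℕ∞) f → HasCompactSupport f →
        (∫ x : Euc N, |f x| ^ (2 * ((N : ℝ) - γ) / ((N : ℝ) - 2)) * ρ x) ^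
            (((N : ℝ) - 2) / ((N : ℝ) - γ)) ≤
          C_S * ∫ x : Euc N, ‖fderiv ℝ f x‖ ^ 2 := by
  obtain ⟨C, hC, sobolev⟩ := weighted_sobolev_inequality_general ℝ (E := Euc N) volume
    (p := 2) (by norm_num) (by rw [finrank_euclideanSpace_fin]; exact_mod_cast hN) hγ0 hγ2.le K
  refine ⟨C, hC, fun ρ hρm hρ f hf hfc => ?_⟩
  simpa using sobolev ρ hρm.aemeasurable hρ f (hf.of_le (by exact_mod_cast le_top)) hfc
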